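/- arXiv:2311.16583 — 3 statements merged into one kernel-verified Lean document; each statement's English description precedes it below -/
import Mathlib

section
/- All zeros of the derivative of the complex Gamma function are real: if z ∈ ℂ is not a non-positive integer and Γ'(z) = 0, then Im z = 0. Equivalently, all zeros of the complex digamma function Ψ = Γ'/Γ are real. -/
/-!
The function `y ↦ ‖Γ(a + iy)‖` does not increase with `|y|`: this holds for each term
`n ^ s * n! / ∏_{j ≤ n} (s + j)` of Gauss's product, since every factor `‖s + j‖` of the denominator
grows with `|y|`, and it passes to the pointwise limit (`norm_Gamma_le_of_abs_im_le`).

Suppose `Γ'(z) = 0` with `y = Im z ≠ 0`. From `Γ(s + 1) = s Γ(s)` one gets `Γ'(z + 1) = Γ(z)`, so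
the derivative at `t = 1` of `t ↦ ‖Γ(Re z + 1 + i t y)‖ ^ 2` is
`2 Re (conj (z Γ(z)) * Γ(z) * i y) = 2 y ^ 2 ‖Γ(z)‖ ^ 2 > 0`.
This contradicts the monotonicity, applied on the vertical line through `z + 1`. Using the shifted
line turns weak monotonicity into a strict inequality, and no convergence of derivatives is needed.
-/

open Filter Topology Set

/-- On a vertical line, the norms of the terms of Gauss's product decrease as `|Im|` grows.
Nonvanishing of `w₁.im` keeps the denominator away from zero. -/
lemma norm_GammaSeq_le_of_abs_im_le {w₁ w₂ : ℂ} (hre : w₁.re = w₂.re) (h0 : w₁.im ≠ 0)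
    (him : |w₁.im| ≤ |w₂.im|) {n : ℕ} (hn : n ≠ 0) :
    ‖Complex.GammaSeq w₂ n‖ ≤ ‖Complex.GammaSeq w₁ n‖ := by
  have hn' : 0 < n := Nat.pos_of_ne_zero hn
  simp only [Complex.GammaSeq, norm_div, norm_mul, norm_prod,
    Complex.norm_natCast_cpow_of_pos hn', hre]
  have hpos : ∀ j : ℕ, 0 < ‖w₁ + j‖ := fun j ↦ by
    rw [norm_pos_iff]
    intro h
    apply h0
    simpa using congrArg Complex.im h
  gcongr with j _
  · exact Finset.prod_pos fun j _ ↦ hpos j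
  · rw [← sq_le_sq₀ (norm_nonneg _) (norm_nonneg _), ← Complex.normSq_eq_norm_sq,
      ← Complex.normSq_eq_norm_sq, Complex.normSq_apply, Complex.normSq_apply]
    have := sq_le_sq.mpr him
    simp only [Complex.add_re, Complex.add_im, Complex.natCast_re, Complex.natCast_im, hre]
    nlinarith

lemma norm_Gamma_le_of_abs_im_le {w₁ w₂ : ℂ} (hre : w₁.re = w₂.re) (h0 : w₁.im ≠ 0)
    (him : |w₁.im| ≤ |w₂.im|) : ‖Complex.Gamma w₂‖ ≤ ‖Complex.Gamma w₁‖ := by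
  refine le_of_tendsto_of_tendsto (Complex.GammaSeq_tendsto_Gamma w₂).norm
    (Complex.GammaSeq_tendsto_Gamma w₁).norm ?_
  filter_upwards [eventually_ne_atTop 0] with n hn
  exact norm_GammaSeq_le_of_abs_im_le hre h0 him hn

/-- All zeros of the derivative of the complex Gamma function are real: if
`z ∈ ℂ` is not a non-positive integer and `Γ'(z) = 0`, then `Im z = 0`.
Equivalently, all zeros of the complex digamma function `Ψ = Γ'/Γ` are real. -/
theorem gamma_deriv_zero_is_real (z : ℂ) (hz : ∀ n : ℕ, z ≠ -(n : ℂ))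
    (hd : deriv Complex.Gamma z = 0) : z.im = 0 := by
  by_contra hy
  have hz0 : z ≠ 0 := by simpa using hz 0
  -- Scaling the imaginary part by `t > 0` treats both signs of `Im z` at once.
  set p : ℝ → ℂ := fun t ↦ ((z.re + 1 : ℝ) : ℂ) + (t : ℂ) * (z.im * Complex.I) with hp
  have hp1 : p 1 = z + 1 := by
    apply Complex.ext <;> simp [hp]
  have hanti : AntitoneOn (fun t ↦ ‖Complex.Gamma (p t)‖ ^ 2) (Ioi 0) := by
    intro s hs t ht hst
    have hs0 : (0 : ℝ) < s := hs
    have ht0 : (0 : ℝ) < t := ht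
    have key : ‖Complex.Gamma (p t)‖ ≤ ‖Complex.Gamma (p s)‖ := by
      apply norm_Gamma_le_of_abs_im_le
      · simp [hp]
      · simp [hp, hs0.ne', hy]
      · simp only [hp, Complex.add_im, Complex.ofReal_im,
          Complex.im_ofReal_mul, Complex.I_im, mul_one, zero_add, abs_mul, abs_of_pos hs0,
          abs_of_pos ht0]
        gcongr
    dsimp only
    gcongr
  have hderivp : HasDerivAt p (z.im * Complex.I) 1 := by
    simpa [hp] using
      ((hasDerivAt_id (1 : ℝ)).ofReal_comp.mul_const (z.im * Complex.I)).const_add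
        (((z.re + 1 : ℝ) : ℂ))
  have hG : HasDerivAt Complex.Gamma (Complex.Gamma z) (p 1) := by
    have hdiff : DifferentiableAt ℂ Complex.Gamma (z + 1) := by
      refine Complex.differentiableAt_Gamma _ fun m h ↦ hz (m + 1) ?_
      push_cast
      linear_combination h
    have h := hdiff.hasDerivAt
    rw [Complex.deriv_Gamma_add_one z hz0, hd, mul_zero, add_zero] at h
    rwa [hp1]
  have hsq := (hG.comp (1 : ℝ) hderivp).norm_sq
  have hle := hanti.derivWithin_nonpos (x := 1)
  rw [derivWithin_of_isOpen isOpen_Ioi (by simp)] at hle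
  have heq := hsq.deriv
  simp only [Function.comp_apply, hp1] at heq
  rw [heq, Complex.Gamma_add_one z hz0] at hle
  have hval : inner ℝ (z * Complex.Gamma z) (Complex.Gamma z * (z.im * Complex.I))
      = z.im ^ 2 * Complex.normSq (Complex.Gamma z) := by
    simp [Complex.inner, Complex.normSq_apply]
    ring
  rw [hval] at hle
  have hΓ : 0 < Complex.normSq (Complex.Gamma z) :=
    Complex.normSq_pos.mpr (Complex.Gamma_ne_zero hz)
  have : 0 < z.im ^ 2 * Complex.normSq (Complex.Gamma z) := by positivity
  linarith
end

section
/- For every real g > γ₀ there exists a unique real x with 0 < x < ψ₀ and Γ(x) = g, where ψ₀ is the unique positive zero of the digamma function and γ₀ = Γ(ψ₀). (This is the positive part of the branch invΓ₋₁ of the real inverse Gamma function.) -/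
/-!
Near `0` the functional equation gives `Γ(x) = Γ(x + 1) / x → +∞`, so the intermediate value
theorem on `[a, ψ₀]`, for a small enough `a > 0`, yields a preimage of `g`. Two distinct preimages
in `(0, ψ₀)` would, by Rolle's theorem, enclose a critical point of `Γ` strictly below `ψ₀`, but
`ψ₀` is the only positive one.
-/

open Filter Topology in
theorem tendsto_Gamma_nhdsGT_zero_atTop : Tendsto Real.Gamma (𝓝[>] 0) atTop := by
  have hcont : ContinuousAt (fun x : ℝ => Real.Gamma (x + 1)) 0 := by
    refine ContinuousAt.comp' (g := Real.Gamma) ?_ (by fun_prop)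
    exact (Real.differentiableOn_Gamma_Ioi.differentiableAt
      (Ioi_mem_nhds (by norm_num))).continuousAt
  have hlim : Tendsto (fun x : ℝ => Real.Gamma (x + 1)) (𝓝[>] 0) (𝓝 1) := by
    have h := hcont.tendsto
    simp only [zero_add, Real.Gamma_one] at h
    exact h.mono_left nhdsWithin_le_nhds
  refine (hlim.pos_mul_atTop one_pos tendsto_inv_nhdsGT_zero).congr' ?_
  filter_upwards [self_mem_nhdsWithin] with x hx
  have hx0 : x ≠ 0 := ne_of_gt hx
  rw [Real.Gamma_add_one hx0]
  field_simp

/-- The positive part of the branch `invΓ₋₁` of the real inverse Gamma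
function: for every real `g > γ₀ = Γ(ψ₀)` there is a unique real `x` with
`0 < x < ψ₀` and `Γ(x) = g`, where `ψ₀` is the unique positive zero of the
digamma function. -/
theorem invGamma_branch_neg_one_pos_part (ψ₀ : ℝ) (hpos : 0 < ψ₀)
    (hzero : deriv Real.Gamma ψ₀ = 0)
    (huniq : ∀ x : ℝ, 0 < x → deriv Real.Gamma x = 0 → x = ψ₀)
    (g : ℝ) (hg : Real.Gamma ψ₀ < g) :
    ∃! x : ℝ, 0 < x ∧ x < ψ₀ ∧ Real.Gamma x = g := by
  have hcont : ∀ a b : ℝ, 0 < a → ContinuousOn Real.Gamma (Set.Icc a b) := fun a b ha =>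
    Real.differentiableOn_Gamma_Ioi.continuousOn.mono fun _ hx => ha.trans_le hx.1
  have hrolle : ∀ x y : ℝ, 0 < x → x < y → y < ψ₀ → Real.Gamma x ≠ Real.Gamma y := by
    intro x y hx hxy hy h
    obtain ⟨c, hc, hc0⟩ := exists_deriv_eq_zero hxy (hcont x y hx) h
    have := huniq c (hx.trans hc.1) hc0
    linarith [hc.2]
  obtain ⟨a, hga, ha0, haψ⟩ := ((tendsto_Gamma_nhdsGT_zero_atTop.eventually_ge_atTop g).and
    (Ioo_mem_nhdsGT hpos)).exists
  obtain ⟨x, hx, hxg⟩ := intermediate_value_Icc' haψ.le (hcont a ψ₀ ha0) ⟨hg.le, hga⟩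
  have hxψ : x ≠ ψ₀ := by
    rintro rfl
    exact hg.ne hxg
  refine ⟨x, ⟨ha0.trans_le hx.1, lt_of_le_of_ne hx.2 hxψ, hxg⟩, ?_⟩
  rintro y ⟨hy0, hyψ, hyg⟩
  rcases lt_trichotomy y x with h | h | h
  · exact absurd (hyg.trans hxg.symm) (hrolle y x hy0 h (lt_of_le_of_ne hx.2 hxψ))
  · exact h
  · exact absurd (hxg.trans hyg.symm) (hrolle x y (ha0.trans_le hx.1) h hyψ)
end

section
/- For every real g ≤ γ₋₁ there exists a unique real x with ψ₋₁ ≤ x < 0 and Γ(x) = g, where ψ₋₁ is the unique zero of the digamma function in (-1, 0) and γ₋₁ = Γ(ψ₋₁). (This is the negative part of the branch invΓ₋₁ of the real inverse Gamma function.) -/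
/-!
`Γ` is differentiable on `(-1, 0)` and its only critical point there is `ψ`, so Rolle's theorem
makes it injective on `[ψ, 0)`. Since `Γ x = Γ (x + 1) / x` and `Γ ≥ 1` on `(0, 1]`, we have
`Γ x ≤ 1 / x` on `(-1, 0)`; hence `Γ` takes arbitrarily negative values near `0⁻`, and the
intermediate value theorem on `[ψ, 0)` yields every `g ≤ Γ ψ`.
-/

lemma differentiableAt_Gamma_of_mem_Ioo {x : ℝ} (h1 : -1 < x) (h2 : x < 0) :
    DifferentiableAt ℝ Real.Gamma x := by
  refine Real.differentiableAt_Gamma fun m hm => ?_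
  rcases m with _ | m
  · simp at hm
    linarith
  · push_cast at hm
    have : (0 : ℝ) ≤ m := m.cast_nonneg
    linarith

lemma Gamma_le_inv_of_mem_Ioo {x : ℝ} (h1 : -1 < x) (h2 : x < 0) :
    Real.Gamma x ≤ x⁻¹ := by
  have h : 1 ≤ Real.Gamma (x + 1) := by
    have := Real.Gamma_strictAntiOn_Ioc.antitoneOn (a := x + 1) (b := 1)
      ⟨by linarith, by linarith⟩ ⟨by norm_num, le_rfl⟩ (by linarith)
    rwa [Real.Gamma_one] at this
  rw [Real.Gamma_add_one h2.ne] at h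
  have hx : x⁻¹ ≤ 0 := inv_nonpos.2 h2.le
  have := mul_le_mul_of_nonpos_left h hx
  rwa [inv_mul_cancel_left₀ h2.ne, mul_one] at this

/-- The negative part of the branch `invΓ₋₁` of the real inverse Gamma
function: for every real `g ≤ γ₋₁ = Γ(ψ₋₁)` there is a unique real `x` with
`ψ₋₁ ≤ x < 0` and `Γ(x) = g`, where `ψ₋₁` is the unique zero of the digamma
function in `(-1, 0)`. -/
theorem invGamma_branch_neg_one_neg_part (ψ : ℝ) (h1 : -1 < ψ) (h2 : ψ < 0)
    (hzero : deriv Real.Gamma ψ = 0)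
    (huniq : ∀ x : ℝ, -1 < x → x < 0 → deriv Real.Gamma x = 0 → x = ψ)
    (g : ℝ) (hg : g ≤ Real.Gamma ψ) :
    ∃! x : ℝ, ψ ≤ x ∧ x < 0 ∧ Real.Gamma x = g := by
  have hcont : ∀ a b : ℝ, ψ ≤ a → b < 0 → ContinuousOn Real.Gamma (Set.Icc a b) :=
    fun a b ha hb x hx => (differentiableAt_Gamma_of_mem_Ioo
      (by linarith [hx.1]) (by linarith [hx.2])).continuousAt.continuousWithinAt
  have hne : ∀ a b : ℝ, ψ ≤ a → a < b → b < 0 → Real.Gamma a ≠ Real.Gamma b := by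
    intro a b ha hab hb heq
    obtain ⟨c, hc, hc0⟩ := exists_deriv_eq_zero hab (hcont a b ha hb) heq
    have := huniq c (by linarith [hc.1]) (by linarith [hc.2]) hc0
    linarith [hc.1]
  -- `b` is so close to `0` that `Γ b ≤ b⁻¹ ≤ -(|g| + 1) ≤ g`.
  obtain ⟨b, hψb, hb, hbg⟩ : ∃ b, ψ ≤ b ∧ b < 0 ∧ Real.Gamma b ≤ g := by
    have hpos : 0 < |g| + 1 := by positivity
    have hneg : (-(|g| + 1))⁻¹ < 0 := inv_lt_zero.2 (by linarith)
    have hb : max ψ (-(|g| + 1))⁻¹ < 0 := max_lt h2 hneg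
    refine ⟨_, le_max_left _ _, hb,
      (Gamma_le_inv_of_mem_Ioo (h1.trans_le (le_max_left _ _)) hb).trans ?_⟩
    have := (inv_le_inv_of_neg hb hneg).2 (le_max_right ψ _)
    rw [inv_inv] at this
    linarith [neg_abs_le g]
  obtain ⟨x, hx, hxg⟩ := intermediate_value_Icc' hψb (hcont ψ b le_rfl hb) ⟨hbg, hg⟩
  refine ⟨x, ⟨hx.1, hx.2.trans_lt hb, hxg⟩, ?_⟩
  rintro y ⟨hy, hy0, hyg⟩
  rcases lt_trichotomy y x with h | h | h
  · exact absurd (hyg.trans hxg.symm) (hne y x hy h (hx.2.trans_lt hb))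
  · exact h
  · exact absurd (hxg.trans hyg.symm) (hne x y hx.1 h hy0)
end
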